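/- There exists a constant C > 0 such that for every continuously differentiable compactly supported function ω : ℝ² → ℝ, the Biot–Savart velocity K[ω](x) = (1/(2π))·∫_{ℝ²} ((x − y)^⊥/‖x − y‖²)·ω(y) dy is continuously differentiable on ℝ² and its total derivative satisfies sup_{x ∈ ℝ²} ‖DK[ω](x)‖ ≤ C·(1 + ‖ω‖_{L¹(ℝ²)} + ‖ω‖_{L^∞(ℝ²)} + ‖ω‖_{L^∞(ℝ²)}·log(1 + ‖∇ω‖_{L^∞(ℝ²)})). -/

import Mathlib

open Real MeasureTheory

/-- The Biot–Savart velocity field `K[ω](x) = (1/2π) ∫ (x-y)^⊥/‖x-y‖² ω(y) dy` in the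
plane `ℝ² ≃ ℂ`, where `v^⊥ = I·v`. -/
noncomputable def Kvel (ω : ℂ → ℝ) (x : ℂ) : ℂ :=
  (2 * π)⁻¹ • ∫ y : ℂ, Complex.I * (x - y) / (‖x - y‖ : ℂ) ^ 2 * (ω y : ℂ)

/-!
The kernel of `K` is, up to the factor `I / (2π)`, `k z = z / ‖z‖²`, whose derivative is not
integrable at the origin. Replace it by `kₑ z = z / (‖z‖² + e²)` and move the derivative in
`ω ⋆ k` differently on the two pieces of `k = (k - kₑ) + kₑ`:
`D(ω ⋆ k) = Dω ⋆ (k - kₑ) + ω ⋆ Dkₑ`.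
In the plane `∫ ‖k - kₑ‖ = π² e`, so the first term is at most `π² e ‖∇ω‖_∞`. Since
`‖Dkₑ‖ ≤ 1 / (‖z‖² + e²)`, the second is at most `π log (1 + e⁻²) ‖ω‖_∞` from the unit disc plus
`‖ω‖₁` from its complement. Choosing `e = 1 / (1 + ‖∇ω‖_∞)` bounds the first term by a constant
and makes the logarithm that of the claim.
-/

open scoped Convolution

section Convolution

variable {E F₁ F₂ F₃ : Type*} [NormedAddCommGroup E] [MeasurableSpace E] [BorelSpace E]
  [NormedAddCommGroup F₁] [NormedSpace ℝ F₁] [NormedAddCommGroup F₂] [NormedSpace ℝ F₂]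
  [NormedAddCommGroup F₃] [NormedSpace ℝ F₃] {μ : Measure E}
  {f : E → F₁} {g g₁ g₂ : E → F₂} {s : Set E} {M N c : ℝ}

theorem norm_convolution_le_of_norm_le_off [μ.IsAddLeftInvariant] [μ.IsNegInvariant]
    (L : F₁ →L[ℝ] F₂ →L[ℝ] F₃) (hs : MeasurableSet s) (hf : Integrable f μ)
    (hfM : ∀ y, ‖f y‖ ≤ M) (hg : IntegrableOn g s μ) (hc : 0 ≤ c) (hgc : ∀ y ∉ s, ‖g y‖ ≤ c)
    (x : E) :
    ‖(f ⋆[L, μ] g) x‖ ≤ ‖L‖ * (M * ∫ y in s, ‖g y‖ ∂μ + c * ∫ y, ‖f y‖ ∂μ) := by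
  have hg_int : Integrable (fun y ↦ M * s.indicator (fun z ↦ ‖g z‖) (x - y)) μ :=
    (((integrable_indicator_iff hs).2 hg.norm).comp_sub_left x).const_mul M
  have hf_int : Integrable (fun y ↦ c * ‖f y‖) μ := hf.norm.const_mul c
  have pointwise (y : E) : ‖L (f y) (g (x - y))‖ ≤
      ‖L‖ * (M * s.indicator (fun z ↦ ‖g z‖) (x - y) + c * ‖f y‖) := by
    refine (L.le_opNorm₂ _ _).trans ?_
    rw [mul_assoc]
    gcongr
    by_cases hy : x - y ∈ s
    · rw [Set.indicator_of_mem hy]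
      exact (mul_le_mul_of_nonneg_right (hfM y) (norm_nonneg _)).trans
        (le_add_of_nonneg_right (by positivity))
    · rw [Set.indicator_of_notMem hy, mul_zero, zero_add, mul_comm]
      exact mul_le_mul_of_nonneg_right (hgc _ hy) (norm_nonneg _)
  calc ‖(f ⋆[L, μ] g) x‖
      ≤ ∫ y, ‖L‖ * (M * s.indicator (fun z ↦ ‖g z‖) (x - y) + c * ‖f y‖) ∂μ :=
        norm_integral_le_of_norm_le ((hg_int.add hf_int).const_mul _) (.of_forall pointwise)
    _ = ‖L‖ * (M * ∫ y in s, ‖g y‖ ∂μ + c * ∫ y, ‖f y‖ ∂μ) := by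
        rw [integral_const_mul, integral_add hg_int hf_int, integral_const_mul,
          integral_const_mul, integral_sub_left_eq_self (s.indicator fun z ↦ ‖g z‖) μ x,
          integral_indicator hs]

variable [NormedSpace ℝ E] [FiniteDimensional ℝ E] [μ.IsAddHaarMeasure]

theorem fderiv_convolution_eq_convolution_fderiv (L : F₁ →L[ℝ] F₂ →L[ℝ] F₃)
    (hf : ContDiff ℝ 1 f) (hf_supp : HasCompactSupport f) (hg : ContDiff ℝ 1 g) (x : E) :
    (fderiv ℝ f ⋆[L.precompL E, μ] g) x = (f ⋆[L.precompR E, μ] fderiv ℝ g) x := by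
  have hf' : Continuous (fderiv ℝ f) := hf.continuous_fderiv one_ne_zero
  have hg' : Continuous (fderiv ℝ g) := hg.continuous_fderiv one_ne_zero
  have hf_diff := hf.differentiable one_ne_zero
  have hg_diff := hg.differentiable one_ne_zero
  have int_left := (hf_supp.fderiv ℝ).convolutionExists_left (L.precompL E) hf'
    (hg.continuous.locallyIntegrable (μ := μ)) x
  have int_right := hf_supp.convolutionExists_left (L.precompR E) hf.continuous
    (hg'.locallyIntegrable (μ := μ)) x
  have int_prod := hf_supp.convolutionExists_left L hf.continuous
    (hg.continuous.locallyIntegrable (μ := μ)) x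
  have fderiv_reflect (y h : E) : fderiv ℝ (fun y ↦ g (x - y)) y h = -fderiv ℝ g (x - y) h := by
    have := (hg_diff (x - y)).hasFDerivAt.comp y ((hasFDerivAt_id y).const_sub x)
    simpa [Function.comp_def] using DFunLike.congr_fun this.fderiv h
  ext h
  rw [convolution_def, convolution_def, ContinuousLinearMap.integral_apply int_left,
    ContinuousLinearMap.integral_apply int_right]
  have by_parts := integral_bilinear_fderiv_right_eq_neg_left_of_integrable (μ := μ) (B := L)
    (f := f) (g := fun y ↦ g (x - y)) (v := h) (int_left.apply_continuousLinearMap h)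
    (by simpa [fderiv_reflect] using! (int_right.apply_continuousLinearMap h).neg) int_prod
    (fun y _ ↦ hf_diff y) (fun y _ ↦ (hg_diff (x - y)).comp y (by fun_prop))
  simpa [fderiv_reflect, integral_neg] using! by_parts.symm

theorem fderiv_convolution_eq_add (L : F₁ →L[ℝ] F₂ →L[ℝ] F₃) (hf : ContDiff ℝ 1 f)
    (hf_supp : HasCompactSupport f) (hg₁ : LocallyIntegrable g₁ μ) (hg₂ : ContDiff ℝ 1 g₂)
    (x : E) :
    fderiv ℝ (f ⋆[L, μ] g₁) x =
      (fderiv ℝ f ⋆[L.precompL E, μ] (g₁ - g₂)) x + (f ⋆[L.precompR E, μ] fderiv ℝ g₂) x := by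
  have hf' : Continuous (fderiv ℝ f) := hf.continuous_fderiv one_ne_zero
  have hg₂_loc : LocallyIntegrable g₂ μ := hg₂.continuous.locallyIntegrable
  have hexists {g : E → F₂} (hg : LocallyIntegrable g μ) :=
    (hf_supp.fderiv ℝ).convolutionExists_left (L.precompL E) hf' hg x
  rw [(hf_supp.hasFDerivAt_convolution_left L hf hg₁ x).fderiv,
    ← fderiv_convolution_eq_convolution_fderiv L hf hf_supp hg₂,
    ← (hexists (hg₁.sub hg₂_loc)).distrib_add (hexists hg₂_loc), sub_add_cancel]

theorem norm_fderiv_convolution_le (L : F₁ →L[ℝ] F₂ →L[ℝ] F₃) (hf : ContDiff ℝ 1 f)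
    (hf_supp : HasCompactSupport f) (hfM : ∀ y, ‖f y‖ ≤ M) (hfN : ∀ y, ‖fderiv ℝ f y‖ ≤ N)
    (hg₁ : LocallyIntegrable g₁ μ) (hg₂ : ContDiff ℝ 1 g₂) (hg : Integrable (g₁ - g₂) μ)
    (hs : MeasurableSet s) (hg₂s : IntegrableOn (fderiv ℝ g₂) s μ) (hc : 0 ≤ c)
    (hg₂c : ∀ y ∉ s, ‖fderiv ℝ g₂ y‖ ≤ c) (x : E) :
    ‖fderiv ℝ (f ⋆[L, μ] g₁) x‖ ≤ ‖L‖ * (N * ∫ y, ‖g₁ y - g₂ y‖ ∂μ +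
      M * ∫ y in s, ‖fderiv ℝ g₂ y‖ ∂μ + c * ∫ y, ‖f y‖ ∂μ) := by
  have hM : 0 ≤ M := (norm_nonneg _).trans (hfM 0)
  have hN : 0 ≤ N := (norm_nonneg _).trans (hfN 0)
  have hf_int : Integrable f μ := hf.continuous.integrable_of_hasCompactSupport hf_supp
  have hf'_int : Integrable (fderiv ℝ f) μ :=
    (hf.continuous_fderiv one_ne_zero).integrable_of_hasCompactSupport (hf_supp.fderiv ℝ)
  have bound_left := norm_convolution_le_of_norm_le_off (L.precompL E) .univ hf'_int hfN
    hg.integrableOn le_rfl (by simp) x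
  rw [zero_mul, add_zero, setIntegral_univ] at bound_left
  rw [fderiv_convolution_eq_add L hf hf_supp hg₁ hg₂, add_assoc, mul_add]
  refine norm_add_le_of_le ?_ ?_
  · exact bound_left.trans (mul_le_mul_of_nonneg_right (L.norm_precompL_le E) (by positivity))
  · exact (norm_convolution_le_of_norm_le_off (L.precompR E) hs hf_int hfM hg₂s hc hg₂c x).trans
      (mul_le_mul_of_nonneg_right (L.norm_precompR_le E) (by positivity))

end Convolution

section MollifiedInversion

variable {E : Type*} [NormedAddCommGroup E] [InnerProductSpace ℝ E] {e : ℝ}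

/-- The inversion `z ↦ z / ‖z‖²` in the unit sphere, smoothed at scale `e`. At `e = 0` it is the
inversion itself, with value `0` at the origin. -/
noncomputable def mollifiedInversion (e : ℝ) (z : E) : E := (‖z‖ ^ 2 + e ^ 2)⁻¹ • z

theorem contDiff_mollifiedInversion {n : WithTop ℕ∞} (he : e ≠ 0) :
    ContDiff ℝ n (mollifiedInversion e : E → E) := by
  have hq : ContDiff ℝ n fun z : E ↦ ‖z‖ ^ 2 + e ^ 2 := (contDiff_norm_sq ℝ).add contDiff_const
  exact (hq.inv fun z ↦ by positivity).smul contDiff_id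

theorem norm_mollifiedInversion_zero_sub (he : e ≠ 0) (z : E) :
    ‖mollifiedInversion 0 z - mollifiedInversion e z‖ = e ^ 2 / (‖z‖ * (‖z‖ ^ 2 + e ^ 2)) := by
  rcases eq_or_ne z 0 with rfl | hz
  · simp [mollifiedInversion]
  have hcoeff : (‖z‖ ^ 2 + 0 ^ 2)⁻¹ - (‖z‖ ^ 2 + e ^ 2)⁻¹ =
      e ^ 2 / (‖z‖ ^ 2 * (‖z‖ ^ 2 + e ^ 2)) := by
    have := norm_pos_iff.2 hz
    field_simp
    ring
  rw [mollifiedInversion, mollifiedInversion, ← sub_smul, hcoeff, norm_smul,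
    Real.norm_of_nonneg (by positivity)]
  field_simp

theorem fderiv_mollifiedInversion_apply (he : e ≠ 0) (z h : E) :
    fderiv ℝ (mollifiedInversion e) z h =
      (‖z‖ ^ 2 + e ^ 2)⁻¹ • (h - (2 * inner ℝ z h / (‖z‖ ^ 2 + e ^ 2)) • z) := by
  have hq : ‖z‖ ^ 2 + e ^ 2 ≠ 0 := by positivity
  have hq' : HasFDerivAt (fun z : E ↦ ‖z‖ ^ 2 + e ^ 2) (2 • innerSL ℝ z) z :=
    (hasStrictFDerivAt_norm_sq z).hasFDerivAt.add_const _
  have := ((hasDerivAt_inv hq).comp_hasFDerivAt z hq').smul (hasFDerivAt_id z)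
  rw [show fderiv ℝ (mollifiedInversion e) z = _ from this.fderiv]
  simp only [add_apply, smul_apply, ContinuousLinearMap.smulRight_apply, Function.comp_apply,
    ContinuousLinearMap.id_apply, id, innerSL_apply_apply, nsmul_eq_mul, smul_eq_mul]
  match_scalars <;> field_simp

/- `h - 2⟪z, h⟫z / ‖z‖²` is a reflection of `h`; enlarging the denominator interpolates between
the reflection and the identity. -/
theorem norm_fderiv_mollifiedInversion_le (he : e ≠ 0) (z : E) :
    ‖fderiv ℝ (mollifiedInversion e) z‖ ≤ (‖z‖ ^ 2 + e ^ 2)⁻¹ := by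
  refine ContinuousLinearMap.opNorm_le_bound _ (by positivity) fun h ↦ ?_
  rw [fderiv_mollifiedInversion_apply he, norm_smul, Real.norm_of_nonneg (by positivity)]
  gcongr
  have hsq : ‖h - (2 * inner ℝ z h / (‖z‖ ^ 2 + e ^ 2)) • z‖ ^ 2 =
      ‖h‖ ^ 2 - (2 * e * inner ℝ z h / (‖z‖ ^ 2 + e ^ 2)) ^ 2 := by
    rw [norm_sub_sq_real, norm_smul, inner_smul_right, real_inner_comm, mul_pow, Real.norm_eq_abs,
      sq_abs]
    field_simp
    ring
  refine le_of_sq_le_sq ?_ (norm_nonneg h)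
  rw [hsq]
  exact sub_le_self _ (sq_nonneg _)

end MollifiedInversion

section Plane

variable {F : Type*} [NormedAddCommGroup F] [NormedSpace ℝ F] {e R : ℝ}

theorem integral_fun_norm_complex (f : ℝ → F) :
    ∫ z : ℂ, f ‖z‖ = (2 * π) • ∫ r in Set.Ioi 0, r • f r := by
  have hball : volume.real (Metric.ball (0 : ℂ) 1) = π := by
    simp [Measure.real, Complex.volume_ball]
  rw [integral_fun_norm_addHaar, hball, Complex.finrank_real_complex, mul_smul, two_smul ℝ,
    two_nsmul]
  simp

theorem setIntegral_ball_fun_norm_complex (f : ℝ → F) (R : ℝ) :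
    ∫ z in Metric.ball (0 : ℂ) R, f ‖z‖ = (2 * π) • ∫ r in Set.Ioo 0 R, r • f r := by
  have hind : (Metric.ball (0 : ℂ) R).indicator (fun z ↦ f ‖z‖) =
      fun z ↦ (Set.Iio R).indicator f ‖z‖ := by
    ext z
    simp [Set.indicator]
  rw [← integral_indicator measurableSet_ball, hind, integral_fun_norm_complex,
    ← Set.Ioi_inter_Iio, ← setIntegral_indicator measurableSet_Iio]
  simp only [Set.indicator_smul_apply]

theorem setIntegral_ball_inv_norm_sq_add_sq (he : e ≠ 0) (hR : 0 ≤ R) :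
    ∫ z in Metric.ball (0 : ℂ) R, (‖z‖ ^ 2 + e ^ 2)⁻¹ = π * log (1 + (R / e) ^ 2) := by
  have hderiv (r : ℝ) : HasDerivAt (fun r ↦ log (r ^ 2 + e ^ 2) / 2) (r • (r ^ 2 + e ^ 2)⁻¹) r := by
    have := (((hasDerivAt_pow 2 r).add_const (e ^ 2)).log (by positivity)).div_const 2
    refine this.congr_deriv ?_
    simp only [Nat.cast_ofNat, Nat.add_one_sub_one, pow_one, smul_eq_mul]
    ring
  have hcont : Continuous fun r : ℝ ↦ r • (r ^ 2 + e ^ 2)⁻¹ :=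
    continuous_id.smul (Continuous.inv₀ (by fun_prop) fun r ↦ by positivity)
  have hlog : log (R ^ 2 + e ^ 2) - log (e ^ 2) = log (1 + (R / e) ^ 2) := by
    rw [← log_div (by positivity) (by positivity)]
    congr 1
    field_simp
    ring
  rw [setIntegral_ball_fun_norm_complex (fun r ↦ (r ^ 2 + e ^ 2)⁻¹), ← integral_Ioc_eq_integral_Ioo,
    ← intervalIntegral.integral_of_le hR, intervalIntegral.integral_eq_sub_of_hasDerivAt
      (fun r _ ↦ hderiv r) (hcont.intervalIntegrable _ _), ← hlog]
  simp only [ne_eq, OfNat.ofNat_ne_zero, not_false_eq_true, zero_pow, zero_add, smul_eq_mul]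
  ring

theorem setIntegral_ball_norm_fderiv_mollifiedInversion_le (he : e ≠ 0) (hR : 0 ≤ R) :
    ∫ z in Metric.ball (0 : ℂ) R, ‖fderiv ℝ (mollifiedInversion e) z‖ ≤
      π * log (1 + (R / e) ^ 2) := by
  have hcont : Continuous fun z : ℂ ↦ (‖z‖ ^ 2 + e ^ 2)⁻¹ :=
    Continuous.inv₀ (by fun_prop) fun z ↦ by positivity
  have hint : IntegrableOn (fun z : ℂ ↦ (‖z‖ ^ 2 + e ^ 2)⁻¹) (Metric.ball 0 R) :=
    (hcont.continuousOn.integrableOn_compact (isCompact_closedBall 0 R)).mono_set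
      Metric.ball_subset_closedBall
  rw [← setIntegral_ball_inv_norm_sq_add_sq he hR]
  exact integral_mono_of_nonneg (.of_forall fun z ↦ norm_nonneg _) hint
    (.of_forall (norm_fderiv_mollifiedInversion_le he))

theorem eqOn_smul_div_inv_one_add_sq (he : e ≠ 0) : Set.EqOn
    (fun r : ℝ ↦ r • (e ^ 2 / (r * (r ^ 2 + e ^ 2)))) (fun r ↦ (1 + (e⁻¹ * r) ^ 2)⁻¹)
    (Set.Ioi 0) := by
  intro r (hr : 0 < r)
  simp only [smul_eq_mul]
  field_simp
  ring

theorem integrable_mollifiedInversion_zero_sub (he : e ≠ 0) :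
    Integrable (mollifiedInversion 0 - mollifiedInversion e : ℂ → ℂ) := by
  have hmeas : Measurable (mollifiedInversion 0 - mollifiedInversion e : ℂ → ℂ) := by
    unfold mollifiedInversion
    fun_prop
  refine (integrable_norm_iff hmeas.aestronglyMeasurable).1 ?_
  simp only [Pi.sub_apply, norm_mollifiedInversion_zero_sub he]
  refine (integrable_fun_norm_addHaar volume
    (f := fun r ↦ e ^ 2 / (r * (r ^ 2 + e ^ 2)))).2 ?_
  rw [Complex.finrank_real_complex]
  simp only [Nat.add_one_sub_one, pow_one]
  rw [integrableOn_congr_fun (eqOn_smul_div_inv_one_add_sq he) measurableSet_Ioi]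
  exact (integrable_inv_one_add_sq.comp_mul_left' (inv_ne_zero he)).integrableOn

theorem integral_norm_mollifiedInversion_zero_sub (he : 0 < e) :
    ∫ z : ℂ, ‖mollifiedInversion 0 z - mollifiedInversion e z‖ = π ^ 2 * e := by
  simp only [norm_mollifiedInversion_zero_sub he.ne']
  rw [integral_fun_norm_complex fun r ↦ e ^ 2 / (r * (r ^ 2 + e ^ 2)),
    setIntegral_congr_fun measurableSet_Ioi (eqOn_smul_div_inv_one_add_sq he.ne'),
    integral_comp_mul_left_Ioi (fun r ↦ (1 + r ^ 2)⁻¹) 0 (inv_pos.2 he),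
    integral_Ioi_inv_one_add_sq]
  simp only [inv_inv, mul_zero, arctan_zero, sub_zero, smul_eq_mul]
  ring

theorem locallyIntegrable_mollifiedInversion_zero :
    LocallyIntegrable (mollifiedInversion 0 : ℂ → ℂ) := by
  have := (integrable_mollifiedInversion_zero_sub one_ne_zero).locallyIntegrable.add
    (contDiff_mollifiedInversion (n := 0) one_ne_zero).continuous.locallyIntegrable
  rwa [sub_add_cancel] at this

end Plane

theorem log_one_add_sq_le {a : ℝ} (ha : 1 ≤ a) : log (1 + a ^ 2) ≤ 1 + 2 * log a := by
  calc log (1 + a ^ 2) ≤ log (2 * a ^ 2) := log_le_log (by positivity) (by nlinarith)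
    _ = log 2 + 2 * log a := by
      rw [log_mul two_ne_zero (by positivity), log_pow, Nat.cast_ofNat]
    _ ≤ 1 + 2 * log a := by linarith [log_two_lt_d9]

section BiotSavart

variable {ω : ℂ → ℝ} {e R M N : ℝ}

theorem Kvel_eq_smul_convolution (ω : ℂ → ℝ) :
    Kvel ω = ((2 * π : ℂ)⁻¹ * Complex.I) •
      (ω ⋆[ContinuousLinearMap.lsmul ℝ ℝ, volume] mollifiedInversion 0) := by
  ext1 x
  rw [Kvel, Pi.smul_apply, convolution_def, Complex.real_smul, smul_eq_mul, mul_assoc,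
    ← integral_const_mul Complex.I]
  push_cast
  congr 1
  refine integral_congr_ae (.of_forall fun y ↦ ?_)
  simp only [mollifiedInversion, ContinuousLinearMap.lsmul_apply, Complex.real_smul]
  push_cast
  ring

theorem contDiff_Kvel (hω : ContDiff ℝ 1 ω) (hω_supp : HasCompactSupport ω) :
    ContDiff ℝ 1 (Kvel ω) := by
  rw [Kvel_eq_smul_convolution]
  exact (hω_supp.contDiff_convolution_left (n := 1) (ContinuousLinearMap.lsmul ℝ ℝ (E := ℂ)) hω
    locallyIntegrable_mollifiedInversion_zero).const_smul (_ : ℂ)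

theorem norm_fderiv_Kvel_le (hω : ContDiff ℝ 1 ω) (hω_supp : HasCompactSupport ω)
    (hωM : ∀ y, ‖ω y‖ ≤ M) (hωN : ∀ y, ‖fderiv ℝ ω y‖ ≤ N) (he : 0 < e) (hR : 0 < R) (x : ℂ) :
    ‖fderiv ℝ (Kvel ω) x‖ ≤ (2 * π)⁻¹ * (N * (π ^ 2 * e) + M * (π * log (1 + (R / e) ^ 2)) +
      (R ^ 2)⁻¹ * ∫ y, ‖ω y‖) := by
  have hM : 0 ≤ M := (norm_nonneg _).trans (hωM 0)
  have hk_diff : ContDiff ℝ 1 (mollifiedInversion e : ℂ → ℂ) := contDiff_mollifiedInversion he.ne'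
  have hk_deriv : IntegrableOn (fderiv ℝ (mollifiedInversion e : ℂ → ℂ)) (Metric.ball 0 R) :=
    ((hk_diff.continuous_fderiv one_ne_zero).continuousOn.integrableOn_compact
      (isCompact_closedBall 0 R)).mono_set Metric.ball_subset_closedBall
  have hk_near := setIntegral_ball_norm_fderiv_mollifiedInversion_le he.ne' hR.le
  have hk_far (z : ℂ) (hz : z ∉ Metric.ball 0 R) :
      ‖fderiv ℝ (mollifiedInversion e) z‖ ≤ (R ^ 2)⁻¹ := by
    refine (norm_fderiv_mollifiedInversion_le he.ne' z).trans ?_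
    rw [mem_ball_zero_iff, not_lt] at hz
    gcongr
    nlinarith
  have hc : ‖(2 * π : ℂ)⁻¹ * Complex.I‖ = (2 * π)⁻¹ := by
    simp [abs_of_pos pi_pos]
  have hconv := norm_fderiv_convolution_le (ContinuousLinearMap.lsmul ℝ ℝ) hω hω_supp hωM hωN
    locallyIntegrable_mollifiedInversion_zero hk_diff
    (integrable_mollifiedInversion_zero_sub he.ne') measurableSet_ball hk_deriv
    (by positivity) hk_far x
  rw [ContinuousLinearMap.opNorm_lsmul, one_mul, integral_norm_mollifiedInversion_zero_sub he]
    at hconv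
  rw [Kvel_eq_smul_convolution, fderiv_const_smul_field, Pi.smul_apply, norm_smul, hc]
  gcongr
  exact hconv.trans (by gcongr)

theorem norm_fderiv_Kvel_le_log (hω : ContDiff ℝ 1 ω) (hω_supp : HasCompactSupport ω)
    (hωM : ∀ y, ‖ω y‖ ≤ M) (hωN : ∀ y, ‖fderiv ℝ ω y‖ ≤ N) (x : ℂ) :
    ‖fderiv ℝ (Kvel ω) x‖ ≤ π / 2 * (1 + (∫ y, ‖ω y‖) + M + M * log (1 + N)) := by
  have hM : 0 ≤ M := (norm_nonneg _).trans (hωM 0)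
  have hN : 0 ≤ N := (norm_nonneg _).trans (hωN 0)
  have hω_int : 0 ≤ ∫ y, ‖ω y‖ := integral_nonneg fun y ↦ norm_nonneg _
  have hMlog : 0 ≤ M * log (1 + N) := mul_nonneg hM (log_nonneg (by linarith))
  have hlog : log (1 + (1 / (1 + N)⁻¹) ^ 2) ≤ 1 + 2 * log (1 + N) := by
    simpa only [one_div, inv_inv] using log_one_add_sq_le (by linarith : 1 ≤ 1 + N)
  have hscale : N * (1 + N)⁻¹ ≤ 1 := by
    rw [← div_eq_mul_inv, div_le_one (by positivity)]
    linarith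
  have hpi : 2 * π ≤ π ^ 2 := by nlinarith [pi_gt_three]
  calc ‖fderiv ℝ (Kvel ω) x‖
      ≤ (2 * π)⁻¹ * (N * (π ^ 2 * (1 + N)⁻¹) + M * (π * log (1 + (1 / (1 + N)⁻¹) ^ 2)) +
          (1 ^ 2)⁻¹ * ∫ y, ‖ω y‖) :=
        norm_fderiv_Kvel_le hω hω_supp hωM hωN (by positivity) one_pos x
    _ = (2 * π)⁻¹ * (π ^ 2 * (N * (1 + N)⁻¹) + M * (π * log (1 + (1 / (1 + N)⁻¹) ^ 2)) +
          ∫ y, ‖ω y‖) := by ring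
    _ ≤ (2 * π)⁻¹ * (π ^ 2 * 1 + M * (π * (1 + 2 * log (1 + N))) + ∫ y, ‖ω y‖) := by gcongr
    _ ≤ (2 * π)⁻¹ * (π ^ 2 * (1 + (∫ y, ‖ω y‖) + M + M * log (1 + N))) := by
      gcongr
      nlinarith [pi_gt_three]
    _ = π / 2 * (1 + (∫ y, ‖ω y‖) + M + M * log (1 + N)) := by field_simp

end BiotSavart

/-- The Biot–Savart velocity is `C¹` and its derivative satisfies a log-Lipschitz type
bound in terms of the vorticity. -/
theorem biot_savart_gradient_bound :
    ∃ C > 0, ∀ ω : ℂ → ℝ, ContDiff ℝ 1 ω → HasCompactSupport ω →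
      ContDiff ℝ 1 (Kvel ω) ∧
      ∀ x : ℂ, ‖fderiv ℝ (Kvel ω) x‖ ≤
        C * (1 + (∫ y : ℂ, |ω y|) + (⨆ y : ℂ, |ω y|)
          + (⨆ y : ℂ, |ω y|) * Real.log (1 + ⨆ y : ℂ, ‖fderiv ℝ ω y‖)) := by
  refine ⟨π / 2, by positivity, fun ω hω hω_supp ↦ ⟨contDiff_Kvel hω hω_supp, fun x ↦ ?_⟩⟩
  have hM (y : ℂ) : |ω y| ≤ ⨆ y, |ω y| :=
    le_ciSup (hω.continuous.norm.bddAbove_range_of_hasCompactSupport hω_supp.norm) y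
  have hN (y : ℂ) : ‖fderiv ℝ ω y‖ ≤ ⨆ y, ‖fderiv ℝ ω y‖ :=
    le_ciSup ((hω.continuous_fderiv one_ne_zero).norm.bddAbove_range_of_hasCompactSupport
      (hω_supp.fderiv ℝ).norm) y
  exact norm_fderiv_Kvel_le_log hω hω_supp hM hN x
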